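/- Let s ≥ 2 and n ≥ 5 be integers and let ε be a constant with 0 < ε ≤ 1/(s²(2s+1)). Let P = (f_1,…,f_n) be a non-trivial protocol on C_n with s colours, let X be uniformly distributed on Fix(P), and let j be any index (indices modulo n). If f_{j−1}, f_j and f_{j+1} are semi-perfect functions and the pairs (X_{j−2}, X_j), (X_{j−1}, X_{j+1}) and (X_j, X_{j+2}) are (s², ε)-uniform, then f_j is a perfect function. -/

import Mathlib

open Finset

/-- Base-`s` Shannon entropy of the random variable `g(X)` where `X` is uniformly
distributed on the finite set `F`. -/
noncomputable def entOf (s : ℕ) {α β : Type} [DecidableEq β] [Fintype β]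
    (F : Finset α) (g : α → β) : ℝ :=
  -∑ y : β, (((F.filter fun c => g c = y).card : ℝ) / (F.card : ℝ)) *
      Real.logb s (((F.filter fun c => g c = y).card : ℝ) / (F.card : ℝ))

/-- The fixed set of a protocol `f` on the cycle `C_n` with `s` colours:
all colourings `c` with `c i = f i (c (i-1), c (i+1))` for every vertex `i`
(vertex indices taken modulo `n`). -/
def cycleFix (n s : ℕ) [NeZero n] (f : ZMod n → Fin s × Fin s → Fin s) :
    Finset (ZMod n → Fin s) :=
  Finset.univ.filter fun c => ∀ i, c i = f i (c (i - 1), c (i + 1))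

/-- `h(i₁,…,i_k)`: entropy (base `s`) of the tuple of coordinates of `X ∈_u F`
indexed by the set `T` of integers (interpreted modulo `n`). -/
noncomputable def entT (n s : ℕ) [NeZero n] (F : Finset (ZMod n → Fin s))
    (T : Finset ℤ) : ℝ :=
  entOf s F (fun c => fun i : {x // x ∈ T} => c ((i.1 : ℤ) : ZMod n))

/-- `H_j^k = h(j,j+1,…,k-1) + h(j+1,j+2,…,k)`. -/
noncomputable def entH (n s : ℕ) [NeZero n] (F : Finset (ZMod n → Fin s))
    (j k : ℤ) : ℝ :=
  entT n s F (Finset.Icc j (k - 1)) + entT n s F (Finset.Icc (j + 1) k)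

/-- Base-`s` Shannon entropy of `g(U)` where `U` is distributed on the finite type
`α` with probability mass function `q`. -/
noncomputable def pEnt (s : ℕ) {α β : Type} [Fintype α] [DecidableEq β] [Fintype β]
    (q : α → ℝ) (g : α → β) : ℝ :=
  -∑ y : β, (∑ x ∈ Finset.univ.filter fun x => g x = y, q x) *
      Real.logb s (∑ x ∈ Finset.univ.filter fun x => g x = y, q x)

/-- The conditional mutual information `I(U₁; U₂ | f(U))` (base `s`), where the pair
`U = (U₁, U₂)` has joint probability mass function `q` on `Z_s × Z_s`, computed via
`I(A;B|C) = H(A,C) + H(B,C) − H(A,B,C) − H(C)`. -/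
noncomputable def condMI (s : ℕ) (f : Fin s × Fin s → Fin s)
    (q : Fin s × Fin s → ℝ) : ℝ :=
  pEnt s q (fun u => (u.1, f u)) + pEnt s q (fun u => (u.2, f u))
    - pEnt s q (fun u => (u.1, u.2, f u)) - pEnt s q f

/-- The uniform probability mass function on `Z_s × Z_s`. -/
noncomputable def unifPair (s : ℕ) : Fin s × Fin s → ℝ := fun _ => 1 / (s ^ 2 : ℝ)

/-- A function `f : Z_s × Z_s → Z_s` is flat if every fibre has exactly `s` elements. -/
def IsFlat (s : ℕ) (f : Fin s × Fin s → Fin s) : Prop :=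
  ∀ z : Fin s, (Finset.univ.filter fun u => f u = z).card = s

/-- A function `f : Z_s × Z_s → Z_s` is semi-perfect if it is flat and, for
`U = (U₁,U₂)` uniform on `Z_s × Z_s`, `I(U₁; U₂ | f(U)) = 0`. -/
def IsSemiPerfect (s : ℕ) (f : Fin s × Fin s → Fin s) : Prop :=
  IsFlat s f ∧ condMI s f (unifPair s) = 0

/-- The pair `(X_a, X_b)` of coordinates of `X ∈_u F` is `(s², ε)`-uniform, i.e. each
value in `Z_s × Z_s` has probability within `ε` of `1/s²`. -/
def pairUnif (n s : ℕ) [NeZero n] (F : Finset (ZMod n → Fin s))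
    (a b : ZMod n) (ε : ℝ) : Prop :=
  ∀ z : Fin s × Fin s,
    |((F.filter fun c => (c a, c b) = z).card : ℝ) / (F.card : ℝ)
      - 1 / (s ^ 2 : ℝ)| ≤ ε

/-- `L(f,z) = { x : f(x,y) = z for some y }`. -/
def Lset (s : ℕ) (f : Fin s × Fin s → Fin s) (z : Fin s) : Finset (Fin s) :=
  Finset.univ.filter fun x => ∃ y, f (x, y) = z

/-- `R(f,z) = { y : f(x,y) = z for some x }`. -/
def Rset (s : ℕ) (f : Fin s × Fin s → Fin s) (z : Fin s) : Finset (Fin s) :=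
  Finset.univ.filter fun y => ∃ x, f (x, y) = z

/-- `f` is perfect if it is semi-perfect and the cardinalities `|L(f,z)|` and
`|R(f,z)|` do not depend on `z`. -/
def IsPerfect (s : ℕ) (f : Fin s × Fin s → Fin s) : Prop :=
  IsSemiPerfect s f ∧ ∀ z z' : Fin s,
    (Lset s f z).card = (Lset s f z').card ∧ (Rset s f z).card = (Rset s f z').card

/-!
Semi-perfectness makes every fibre of `f` a rectangle `L(f,z) × R(f,z)`: this is the equality case
of Gibbs' inequality `∑ log ρ ≤ ∑ (ρ - 1) ≤ 0`, where `ρ` is the product of the row and column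
counts of a point within its fibre, divided by the size of the fibre. For a flat `f` the rectangles
all have area `s`.

The event `X_{j-1} = a, X_j = z` can be described through the pair `(X_{j-2}, X_j)`, which has to
lie in a set of `|L(f_{j-1},a)|` values, or through `(X_{j-1}, X_{j+1})`, which has to lie in a set
of `|R(f_j,z)|` values. Both pairs are so close to uniform that these two integers agree. Hence
`|R(f_j, f_j(a,b))|` depends only on `a`, by symmetry `|L(f_j, f_j(a,b))|` depends only on `b`, and
since their product is `s`, both are constant.
-/

/-- The fibres of `f` are rectangles, i.e. each fibre contains the corner `(a, b)` as soon as it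
contains `(a, b')` and `(a', b)`. This is the combinatorial content of `I(U₁; U₂ | f(U)) = 0`. -/
def HasRectFibers {α β γ : Type*} (f : α × β → γ) : Prop :=
  ∀ ⦃a a' : α⦄ ⦃b b' : β⦄, f (a, b') = f (a', b) → f (a, b) = f (a', b)

/-- The ratio by which the rectangle spanned by the row and the column of `u` within its fibre
exceeds the fibre. For `U` uniform, `I(U₁; U₂ | f(U))` is the mean of `-log_s (fiberRatio f U)`. -/
noncomputable def fiberRatio {α β γ : Type*} [Fintype α] [Fintype β] [DecidableEq γ]
    (f : α × β → γ) (u : α × β) : ℝ :=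
  (#{b | f (u.1, b) = f u} * #{a | f (a, u.2) = f u} : ℝ) / #{v | f v = f u}

/-- For `ω` uniform on `F`, the random variable `Y ω` is `(k, ε)`-uniform, where `k` is the size of
its codomain. If `F` is empty, every frequency is `0 / 0 = 0`. -/
def IsNearUniform {Ω β : Type*} [Fintype β] [DecidableEq β] (F : Finset Ω) (Y : Ω → β) (ε : ℝ) :
    Prop :=
  ∀ y, |(#{ω ∈ F | Y ω = y} : ℝ) / #F - 1 / Fintype.card β| ≤ ε

lemma HasRectFibers.comp_swap {α β γ : Type*} {f : α × β → γ} (hf : HasRectFibers f) :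
    HasRectFibers (f ∘ Prod.swap) :=
  fun _ _ _ _ h ↦ (hf h.symm).trans h

section FibreCounts

variable {α β γ : Type*} [Fintype α] [Fintype β] [DecidableEq γ] (f : α × β → γ)

lemma card_filter_fst_eq [DecidableEq α] (a : α) (z : γ) :
    #{u | (u.1, f u) = (a, z)} = #{b | f (a, b) = z} := by
  refine card_nbij' Prod.snd (Prod.mk a) ?_ ?_ ?_ ?_ <;> intro <;> aesop

lemma card_filter_snd_eq [DecidableEq β] (b : β) (z : γ) :
    #{u | (u.2, f u) = (b, z)} = #{a | f (a, b) = z} := by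
  refine card_nbij' Prod.fst (·, b) ?_ ?_ ?_ ?_ <;> intro <;> aesop

lemma sum_card_row_mul_card_col (z : γ) :
    ∑ u : α × β, #{b | f (u.1, b) = z} * #{a | f (a, u.2) = z} = #{u | f u = z} ^ 2 := by
  have hrow : ∑ a, #{b | f (a, b) = z} = #{u | f u = z} := by
    simp only [card_filter, Fintype.sum_prod_type]
  have hcol : ∑ b, #{a | f (a, b) = z} = #{u | f u = z} := by
    simp only [card_filter, Fintype.sum_prod_type_right]
  calc ∑ u : α × β, #{b | f (u.1, b) = z} * #{a | f (a, u.2) = z}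
      = (∑ a, #{b | f (a, b) = z}) * ∑ b, #{a | f (a, b) = z} := by
        rw [sum_mul_sum, Fintype.sum_prod_type]
    _ = #{u | f u = z} ^ 2 := by rw [hrow, hcol, sq]

lemma sum_fiber_card_row_mul_card_col_le (z : γ) :
    ∑ u with f u = z, #{b | f (u.1, b) = z} * #{a | f (a, u.2) = z} ≤ #{u | f u = z} ^ 2 :=
  (sum_le_sum_of_subset (filter_subset _ _)).trans_eq (sum_card_row_mul_card_col f z)

lemma sum_fiber_card_row_mul_card_col_lt {a a' : α} {b b' : β} {z : γ} (hrow : f (a, b') = z)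
    (hcol : f (a', b) = z) (hne : f (a, b) ≠ z) :
    ∑ u with f u = z, #{b | f (u.1, b) = z} * #{a | f (a, u.2) = z} < #{u | f u = z} ^ 2 := by
  rw [← sum_card_row_mul_card_col]
  refine sum_lt_sum_of_subset (i := (a, b)) (filter_subset _ _) (mem_univ _) (by simpa using hne)
    (Nat.mul_pos ?_ ?_) fun _ _ _ ↦ Nat.zero_le _
  · exact card_pos.2 ⟨b', by simpa using hrow⟩
  · exact card_pos.2 ⟨a', by simpa using hcol⟩

lemma fiberRatio_pos (u : α × β) : 0 < fiberRatio f u := by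
  have hrow : 0 < #{b | f (u.1, b) = f u} := card_pos.2 ⟨u.2, by simp⟩
  have hcol : 0 < #{a | f (a, u.2) = f u} := card_pos.2 ⟨u.1, by simp⟩
  have hfib : 0 < #{v | f v = f u} := card_pos.2 ⟨u, by simp⟩
  unfold fiberRatio
  positivity

lemma sum_fiberRatio_sub_one :
    ∑ u, (fiberRatio f u - 1) = ∑ z ∈ univ.image f,
      ((∑ u with f u = z, #{b | f (u.1, b) = z} * #{a | f (a, u.2) = z} : ℕ) /
        (#{v | f v = z} : ℝ) - #{v | f v = z}) := by
  rw [← sum_fiberwise_of_maps_to (g := f) (t := univ.image f) fun u _ ↦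
    mem_image_of_mem f (mem_univ u)]
  refine sum_congr rfl fun z _ ↦ ?_
  calc _ = ∑ u with f u = z,
          ((#{b | f (u.1, b) = z} * #{a | f (a, u.2) = z} : ℝ) / #{v | f v = z} - 1) :=
        sum_congr rfl fun u hu ↦ by rw [fiberRatio, (mem_filter.1 hu).2]
    _ = _ := by
        rw [sum_sub_distrib, ← sum_div, sum_const, nsmul_one]
        push_cast
        rfl

lemma hasRectFibers_of_sum_log_nonneg (h : 0 ≤ ∑ u, Real.log (fiberRatio f u)) :
    HasRectFibers f := by
  intro a a' b b' hab
  by_contra hne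
  have hsum : 0 ≤ ∑ u, (fiberRatio f u - 1) :=
    h.trans (sum_le_sum fun u _ ↦ Real.log_le_sub_one_of_pos (fiberRatio_pos f u))
  refine hsum.not_gt ?_
  rw [sum_fiberRatio_sub_one]
  refine sum_neg' (fun z _ ↦ sub_nonpos.2 ?_)
    ⟨f (a', b), mem_image_of_mem f (mem_univ _), sub_neg.2 ?_⟩
  · refine div_le_of_le_mul₀ (by positivity) (by positivity) ?_
    rw [← sq]
    exact_mod_cast sum_fiber_card_row_mul_card_col_le f z
  · have hfib : 0 < #{v | f v = f (a', b)} := card_pos.2 ⟨(a', b), by simp⟩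
    rw [div_lt_iff₀ (by positivity), ← sq]
    exact_mod_cast sum_fiber_card_row_mul_card_col_lt f hab rfl hne

end FibreCounts

section Entropy

lemma pEnt_const (s : ℕ) {α β : Type} [Fintype α] [DecidableEq β] [Fintype β] (w : ℝ)
    (g : α → β) :
    pEnt s (fun _ ↦ w) g = -∑ u, w * Real.logb s (#{v | g v = g u} * w) := by
  rw [pEnt, ← sum_fiberwise univ g]
  congr 1
  refine sum_congr rfl fun y _ ↦ ?_
  rw [sum_mul]
  refine sum_congr rfl fun u hu ↦ ?_
  rw [(mem_filter.1 hu).2, sum_const, nsmul_eq_mul]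

variable {s : ℕ}

lemma condMI_unifPair (f : Fin s × Fin s → Fin s) :
    condMI s f (unifPair s) =
      -(1 / (s ^ 2 * Real.log s) * ∑ u, Real.log (fiberRatio f u)) := by
  have hpoint (u : Fin s × Fin s) :
      #{v : Fin s × Fin s | (v.1, v.2, f v) = (u.1, u.2, f u)} = 1 :=
    card_eq_one.2 ⟨u, by aesop⟩
  unfold condMI unifPair
  simp only [pEnt_const, hpoint, card_filter_fst_eq, card_filter_snd_eq]
  rw [mul_sum]
  simp only [← sum_neg_distrib, ← sum_add_distrib, ← sum_sub_distrib]
  refine sum_congr rfl fun u _ ↦ ?_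
  have hrow : (#{b | f (u.1, b) = f u} : ℝ) ≠ 0 :=
    Nat.cast_ne_zero.2 (card_ne_zero.2 ⟨u.2, by simp⟩)
  have hcol : (#{a | f (a, u.2) = f u} : ℝ) ≠ 0 :=
    Nat.cast_ne_zero.2 (card_ne_zero.2 ⟨u.1, by simp⟩)
  have hfib : (#{v | f v = f u} : ℝ) ≠ 0 :=
    Nat.cast_ne_zero.2 (card_ne_zero.2 ⟨u, by simp⟩)
  have hs : (s : ℝ) ≠ 0 := Nat.cast_ne_zero.2 (Fin.pos u.1).ne'
  have hw : 1 / (s : ℝ) ^ 2 ≠ 0 := by positivity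
  rw [fiberRatio, Real.log_div (mul_ne_zero hrow hcol) hfib, Real.log_mul hrow hcol, Nat.cast_one,
    one_mul]
  simp only [Real.logb, Real.log_mul hrow hw, Real.log_mul hcol hw, Real.log_mul hfib hw]
  ring

lemma hasRectFibers_of_condMI_eq_zero (hs : 2 ≤ s) {f : Fin s × Fin s → Fin s}
    (hf : condMI s f (unifPair s) = 0) : HasRectFibers f := by
  have hlog : 0 < Real.log s := Real.log_pos (by exact_mod_cast hs)
  have hc : 1 / (s ^ 2 * Real.log s) ≠ 0 := by positivity
  rw [condMI_unifPair, neg_eq_zero, mul_eq_zero_iff_left hc] at hf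
  exact hasRectFibers_of_sum_log_nonneg f hf.ge

end Entropy

section LeftRightSets

variable {s : ℕ} {f : Fin s × Fin s → Fin s}

lemma Lset_product_Rset (hf : HasRectFibers f) (z : Fin s) :
    Lset s f z ×ˢ Rset s f z = univ.filter fun u ↦ f u = z := by
  ext ⟨a, b⟩
  simp only [Lset, Rset, mem_product, mem_filter_univ]
  constructor
  · rintro ⟨⟨b', hb'⟩, a', rfl⟩
    exact hf hb'
  · exact fun h ↦ ⟨⟨b, h⟩, a, h⟩

lemma Rset_apply (hf : HasRectFibers f) (a b : Fin s) :
    Rset s f (f (a, b)) = univ.filter fun y ↦ f (a, y) = f (a, b) := by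
  ext y
  simp only [Rset, mem_filter_univ]
  exact ⟨fun ⟨_, hx⟩ ↦ (hf hx.symm).trans hx, fun h ↦ ⟨a, h⟩⟩

lemma Lset_apply (hf : HasRectFibers f) (a b : Fin s) :
    Lset s f (f (a, b)) = univ.filter fun x ↦ f (x, b) = f (a, b) :=
  Rset_apply hf.comp_swap b a

lemma IsFlat.exists_apply_eq (hf : IsFlat s f) (z : Fin s) : ∃ a b, f (a, b) = z := by
  obtain ⟨⟨a, b⟩, hab⟩ := card_pos.1 ((Fin.pos z).trans_eq (hf z).symm)
  exact ⟨a, b, (mem_filter.1 hab).2⟩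

lemma IsFlat.card_Lset_mul_card_Rset (hf : IsFlat s f) (hr : HasRectFibers f) (z : Fin s) :
    #(Lset s f z) * #(Rset s f z) = s := by
  rw [← card_product, Lset_product_Rset hr, hf z]

lemma IsFlat.card_Lset_Rset_eq (hf : IsFlat s f) (hr : HasRectFibers f) {φ ψ : Fin s → ℕ}
    (hR : ∀ a b, #(Rset s f (f (a, b))) = φ a) (hL : ∀ a b, #(Lset s f (f (a, b))) = ψ b)
    (z z' : Fin s) :
    #(Lset s f z) = #(Lset s f z') ∧ #(Rset s f z) = #(Rset s f z') := by
  have hmul (a b : Fin s) : ψ b * φ a = s := by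
    rw [← hR a b, ← hL a b, hf.card_Lset_mul_card_Rset hr]
  have hpos (a b : Fin s) : 0 < ψ b * φ a := (Fin.pos z).trans_eq (hmul a b).symm
  obtain ⟨a, b, rfl⟩ := hf.exists_apply_eq z
  obtain ⟨a', b', rfl⟩ := hf.exists_apply_eq z'
  rw [hL, hL, hR, hR]
  exact ⟨Nat.eq_of_mul_eq_mul_right (Nat.pos_of_mul_pos_left (hpos a b))
      ((hmul a b).trans (hmul a b').symm),
    Nat.eq_of_mul_eq_mul_left (Nat.pos_of_mul_pos_right (hpos a b))
      ((hmul a b).trans (hmul a' b).symm)⟩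

end LeftRightSets

section NearUniform

variable {Ω β : Type*} [Fintype β] [DecidableEq β] {F : Finset Ω} {Y Y' : Ω → β} {ε : ℝ}

lemma IsNearUniform.nonneg [Nonempty β] (hY : IsNearUniform F Y ε) : 0 ≤ ε :=
  (abs_nonneg _).trans (hY (Classical.arbitrary β))

lemma IsNearUniform.equiv_comp {δ : Type*} [Fintype δ] [DecidableEq δ] (hY : IsNearUniform F Y ε)
    (e : β ≃ δ) : IsNearUniform F (e ∘ Y) ε := by
  intro y
  simpa only [Function.comp_apply, ← Equiv.eq_symm_apply, Fintype.card_congr e]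
    using hY (e.symm y)

lemma IsNearUniform.abs_card_mem_div_sub_le (hY : IsNearUniform F Y ε) (S : Finset β) :
    |(#{ω ∈ F | Y ω ∈ S} : ℝ) / #F - #S / Fintype.card β| ≤ #S * ε := by
  have hcard : #{ω ∈ F | Y ω ∈ S} = ∑ y ∈ S, #{ω ∈ F | Y ω = y} := by
    rw [card_eq_sum_card_fiberwise (f := Y) (s := {ω ∈ F | Y ω ∈ S}) (t := S)
      fun ω hω ↦ (mem_filter.1 (mem_coe.1 hω)).2]
    refine sum_congr rfl fun y hy ↦ congrArg card ?_
    aesop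
  calc |(#{ω ∈ F | Y ω ∈ S} : ℝ) / #F - #S / Fintype.card β|
      = |∑ y ∈ S, ((#{ω ∈ F | Y ω = y} : ℝ) / #F - 1 / Fintype.card β)| := by
        rw [hcard, sum_sub_distrib, ← sum_div, sum_const, nsmul_eq_mul, mul_one_div, Nat.cast_sum]
    _ ≤ ∑ y ∈ S, |(#{ω ∈ F | Y ω = y} : ℝ) / #F - 1 / Fintype.card β| := abs_sum_le_sum_abs _ _
    _ ≤ ∑ _y ∈ S, ε := sum_le_sum fun y _ ↦ hY y
    _ = #S * ε := by rw [sum_const, nsmul_eq_mul]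

lemma IsNearUniform.card_eq_of_mem_iff (hY : IsNearUniform F Y ε) (hY' : IsNearUniform F Y' ε)
    {S T : Finset β} (hST : ∀ ω ∈ F, Y ω ∈ S ↔ Y' ω ∈ T)
    (hε : (#S + #T) * ε < 1 / Fintype.card β) : #S = #T := by
  have hS := hY.abs_card_mem_div_sub_le S
  have hT := hY'.abs_card_mem_div_sub_le T
  rw [← filter_congr hST] at hT
  rw [abs_sub_comm] at hS
  have hlt : |(#S : ℝ) / Fintype.card β - #T / Fintype.card β| < 1 / Fintype.card β :=
    ((abs_sub_le _ _ _).trans (add_le_add hS hT)).trans_lt ((add_mul _ _ _).symm.trans_lt hε)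
  have hk : (0 : ℝ) < Fintype.card β := one_div_pos.1 ((abs_nonneg _).trans_lt hlt)
  rw [← sub_div, abs_div, abs_of_pos hk, div_lt_div_iff_of_pos_right hk] at hlt
  have hlt' : |(#S : ℤ) - #T| < 1 := by exact_mod_cast hlt
  exact_mod_cast sub_eq_zero.1 (Int.abs_lt_one_iff.1 hlt')

end NearUniform

section Path

lemma card_col_eq_card_row {Ω α : Type*} [Fintype α] [DecidableEq α] {F : Finset Ω}
    {X₀ X₁ X₂ X₃ : Ω → α} {f g : α × α → α} {ε : ℝ} (hε : 2 * Fintype.card α ^ 3 * ε < 1)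
    (h₁ : ∀ ω ∈ F, X₁ ω = f (X₀ ω, X₂ ω)) (h₂ : ∀ ω ∈ F, X₂ ω = g (X₁ ω, X₃ ω))
    (hu₁ : IsNearUniform F (fun ω ↦ (X₀ ω, X₂ ω)) ε)
    (hu₂ : IsNearUniform F (fun ω ↦ (X₁ ω, X₃ ω)) ε) (y z : α) :
    #{x | f (x, z) = y} = #{w | g (y, w) = z} := by
  have : Nonempty α := ⟨y⟩
  have hcol : #{x | f (x, z) = y} ≤ Fintype.card α := card_le_univ _
  have hrow : #{w | g (y, w) = z} ≤ Fintype.card α := card_le_univ _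
  have hk : (0 : ℝ) < Fintype.card α := Nat.cast_pos.2 Fintype.card_pos
  rw [← card_filter_snd_eq] at hcol ⊢
  rw [← card_filter_fst_eq] at hrow ⊢
  refine hu₁.card_eq_of_mem_iff hu₂ (fun ω hω ↦ ?_) ?_
  · simp only [mem_filter_univ, ← h₁ ω hω, ← h₂ ω hω, Prod.mk.injEq]
    exact and_comm
  · calc _ ≤ ((Fintype.card α : ℝ) + Fintype.card α) * ε := by
          have := hu₁.nonneg
          gcongr
      _ < 1 / Fintype.card (α × α) := by
          rw [Fintype.card_prod, Nat.cast_mul, lt_div_iff₀ (by positivity)]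
          linarith

variable {Ω : Type*} {s : ℕ} {F : Finset Ω} {ε : ℝ}

lemma card_Rset_apply_eq_card_Lset {X₀ X₁ X₂ X₃ : Ω → Fin s} {f g : Fin s × Fin s → Fin s}
    (hε : 2 * s ^ 3 * ε < 1) (hf : HasRectFibers f) (hg : HasRectFibers g)
    (h₁ : ∀ ω ∈ F, X₁ ω = f (X₀ ω, X₂ ω)) (h₂ : ∀ ω ∈ F, X₂ ω = g (X₁ ω, X₃ ω))
    (hu₁ : IsNearUniform F (fun ω ↦ (X₀ ω, X₂ ω)) ε)
    (hu₂ : IsNearUniform F (fun ω ↦ (X₁ ω, X₃ ω)) ε) (a b : Fin s) :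
    #(Rset s g (g (a, b))) = #(Lset s f a) := by
  have hcount : #{x | f (x, g (a, b)) = a} = #{w | g (a, w) = g (a, b)} :=
    card_col_eq_card_row (by simpa only [Fintype.card_fin] using hε) h₁ h₂ hu₁ hu₂ a (g (a, b))
  have hpos : 0 < #{x | f (x, g (a, b)) = a} := hcount ▸ card_pos.2 ⟨b, by simp⟩
  obtain ⟨x, hx⟩ := card_pos.1 hpos
  have hx : f (x, g (a, b)) = a := (mem_filter.1 hx).2
  have hL : Lset s f a = univ.filter fun x ↦ f (x, g (a, b)) = a := by
    simpa only [hx] using Lset_apply hf x (g (a, b))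
  rw [Rset_apply hg, hL, hcount]

theorem cycle_guessing_stmt16_general {X₀ X₁ X₂ X₃ X₄ : Ω → Fin s}
    {f₁ f₂ f₃ : Fin s × Fin s → Fin s} (hs : 2 ≤ s) (hε : 2 * s ^ 3 * ε < 1)
    (hf₁ : condMI s f₁ (unifPair s) = 0) (hf₂ : IsSemiPerfect s f₂)
    (hf₃ : condMI s f₃ (unifPair s) = 0)
    (h₁ : ∀ ω ∈ F, X₁ ω = f₁ (X₀ ω, X₂ ω)) (h₂ : ∀ ω ∈ F, X₂ ω = f₂ (X₁ ω, X₃ ω))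
    (h₃ : ∀ ω ∈ F, X₃ ω = f₃ (X₂ ω, X₄ ω))
    (hu₁ : IsNearUniform F (fun ω ↦ (X₀ ω, X₂ ω)) ε)
    (hu₂ : IsNearUniform F (fun ω ↦ (X₁ ω, X₃ ω)) ε)
    (hu₃ : IsNearUniform F (fun ω ↦ (X₂ ω, X₄ ω)) ε) :
    IsPerfect s f₂ := by
  have hr₁ := hasRectFibers_of_condMI_eq_zero hs hf₁
  have hr₂ := hasRectFibers_of_condMI_eq_zero hs hf₂.2
  have hr₃ := hasRectFibers_of_condMI_eq_zero hs hf₃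
  have hR (a b : Fin s) : #(Rset s f₂ (f₂ (a, b))) = #(Lset s f₁ a) :=
    card_Rset_apply_eq_card_Lset hε hr₁ hr₂ h₁ h₂ hu₁ hu₂ a b
  -- Reversing the path swaps the arguments of the `fᵢ`, and with them left and right sets.
  have hL (a b : Fin s) : #(Lset s f₂ (f₂ (a, b))) = #(Rset s f₃ b) :=
    card_Rset_apply_eq_card_Lset hε hr₃.comp_swap hr₂.comp_swap h₃ h₂
      (hu₃.equiv_comp (Equiv.prodComm _ _)) (hu₂.equiv_comp (Equiv.prodComm _ _)) b a
  exact ⟨hf₂, hf₂.1.card_Lset_Rset_eq hr₂ hR hL⟩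

end Path

section Cycle

variable {n s : ℕ} [NeZero n]

lemma apply_eq_of_mem_cycleFix {f : ZMod n → Fin s × Fin s → Fin s} {c : ZMod n → Fin s}
    (hc : c ∈ cycleFix n s f) {i j k : ZMod n} (hi : j - 1 = i) (hk : j + 1 = k) :
    c j = f j (c i, c k) := by
  subst hi hk
  exact (mem_filter.1 hc).2 j

lemma pairUnif.isNearUniform {F : Finset (ZMod n → Fin s)} {a b : ZMod n} {ε : ℝ}
    (h : pairUnif n s F a b ε) : IsNearUniform F (fun c ↦ (c a, c b)) ε := by
  simpa only [IsNearUniform, pairUnif, Fintype.card_prod, Fintype.card_fin, ← sq, Nat.cast_pow]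
    using h

end Cycle

lemma two_mul_cube_mul_lt_one {x ε : ℝ} (hx : 0 < x) (hε : ε ≤ 1 / (x ^ 2 * (2 * x + 1))) :
    2 * x ^ 3 * ε < 1 := by
  calc 2 * x ^ 3 * ε ≤ 2 * x ^ 3 * (1 / (x ^ 2 * (2 * x + 1))) := by gcongr
    _ = 2 * x / (2 * x + 1) := by field_simp
    _ < 1 := by rw [div_lt_one (by positivity)]; linarith

/-- Let `s ≥ 2`, `n ≥ 5` and `0 < ε ≤ 1/(s²(2s+1))`.  Let `P` be a
non-trivial protocol on `C_n` with `s` colours, `X` uniform on `Fix(P)`, and `j` any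
index (modulo `n`).  If `f_{j-1}, f_j, f_{j+1}` are semi-perfect and the pairs
`(X_{j-2}, X_j)`, `(X_{j-1}, X_{j+1})`, `(X_j, X_{j+2})` are `(s², ε)`-uniform,
then `f_j` is a perfect function. -/
theorem cycle_guessing_stmt16 (n s : ℕ) [NeZero n] (hn : 5 ≤ n) (hs : 2 ≤ s)
    (ε : ℝ) (hε : 0 < ε) (hε' : ε ≤ 1 / ((s : ℝ) ^ 2 * (2 * s + 1)))
    (f : ZMod n → Fin s × Fin s → Fin s)
    (hne : (cycleFix n s f).Nonempty)
    (j : ZMod n)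
    (hm : IsSemiPerfect s (f (j - 1))) (hj : IsSemiPerfect s (f j))
    (hp : IsSemiPerfect s (f (j + 1)))
    (hu1 : pairUnif n s (cycleFix n s f) (j - 2) j ε)
    (hu2 : pairUnif n s (cycleFix n s f) (j - 1) (j + 1) ε)
    (hu3 : pairUnif n s (cycleFix n s f) j (j + 2) ε) :
    IsPerfect s (f j) := by
  exact cycle_guessing_stmt16_general hs (two_mul_cube_mul_lt_one (by positivity) hε')
    hm.2 hj hp.2 (fun _ hc ↦ apply_eq_of_mem_cycleFix hc (by ring) (by ring))
    (fun _ hc ↦ apply_eq_of_mem_cycleFix hc rfl rfl)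
    (fun _ hc ↦ apply_eq_of_mem_cycleFix hc (by ring) (by ring))
    hu1.isNearUniform hu2.isNearUniform hu3.isNearUniform
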